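/- Let N be a positive integer, 0 ≤ α < 1/4, and let F̃ be the NUDFT matrix associated with a set of α-perturbed nodes. Then F̃ is invertible and ‖F̃^{−1}‖₂ ≤ 1/((1−φ_α)√(2N+1)), where φ_α = 1 − cos(πα) + sin(πα) and ‖·‖₂ denotes the spectral norm. -/

import Mathlib

open Real Finset

/-!
The perturbed transform is the entrywise product of the equispaced one with a matrix
`exp (-i xⱼ tₖ)`, where `|xⱼ| ≤ θ = πα` and `|tₖ| ≤ 1`, so the perturbation is governed by the norm
of the Schur multiplier `exp (-i xⱼ tₖ) - 1`. Expand `sin (x t)` in the exponentials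
`exp (i (n + 1/2) π (1 - t))`: while `|x| ≤ θ ≤ π/4`, each coefficient is dominated by its value at
`x = θ`, which is nonnegative, and at `t = 1` these values sum to `sin θ`. Hence `sin (xⱼ tₖ)` has
multiplier norm at most `sin θ`. The cosine needs no expansion of its own: multiplier norms are
submultiplicative and `1 - cos z = 2 sin² (z/2)`, so `1 - cos (xⱼ tₖ)` has norm at most
`2 sin² (θ/2) = 1 - cos θ`. The equispaced matrix is `√M` times a unitary one, and a relative
perturbation of size `φ < 1` keeps it invertible while enlarging the norm of the inverse by a factor
of at most `1 / (1 - φ)`.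
-/

section FourierSeries

open AddCircle

theorem hasSum_fourierCoeffOn_mul_fourier {a b : ℝ} (hab : a < b) {f : ℝ → ℂ}
    (hf : ContinuousOn f (Set.Icc a b)) (hper : f a = f b)
    (hsum : Summable (fourierCoeffOn hab f)) {x : ℝ} (hx : x ∈ Set.Icc a b) :
    HasSum (fun n ↦ fourierCoeffOn hab f n * fourier n (x : AddCircle (b - a))) (f x) := by
  have : Fact (0 < b - a) := ⟨sub_pos.mpr hab⟩
  have hb : a + (b - a) = b := add_sub_cancel a b
  have hper' : f a = f (a + (b - a)) := by rw [hb, hper]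
  have hcont : Continuous (liftIoc (b - a) a f) := by
    rw [liftIoc_eq_liftIco hper']
    exact liftIco_continuous hper' (by rwa [hb])
  have hval : liftIoc (b - a) a f (x : AddCircle (b - a)) = f x := by
    rcases hx.2.eq_or_lt with rfl | hxb
    · exact liftIoc_coe_apply ⟨hab, hb.ge⟩
    · rw [liftIoc_eq_liftIco hper']
      exact liftIco_coe_apply ⟨hx.1, hb.symm ▸ hxb⟩
  simpa only [ContinuousMap.coe_mk, hval, smul_eq_mul] using!
    has_pointwise_sum_fourier_series_of_summable (f := ⟨_, hcont⟩) hsum (x : AddCircle (b - a))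

/-- The coefficients `cₙ(θ)` in `sin (θ t) = ∑ₙ cₙ(θ) exp (i (n + 1/2) π (1 - t))` for `|t| ≤ 1`,
an expansion in the exponentials of half-integer frequency. The formula is meant for `cos θ ≠ 0`,
where no denominator vanishes. -/
noncomputable def halfIntegerSinCoeff (θ : ℝ) (n : ℤ) : ℝ :=
  θ * cos θ / (((n + 1 / 2) * π) ^ 2 - θ ^ 2)

theorem cos_eq_zero_of_sq_eq_sq {θ : ℝ} {n : ℤ} (h : θ ^ 2 = ((n + 1 / 2) * π) ^ 2) :
    cos θ = 0 := by
  have hcos : cos ((n + 1 / 2) * π) = 0 := cos_eq_zero_iff.mpr ⟨n, by ring⟩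
  rcases sq_eq_sq_iff_eq_or_eq_neg.mp h with rfl | rfl
  · exact hcos
  · rwa [cos_neg]

theorem summable_halfIntegerSinCoeff (θ : ℝ) : Summable (halfIntegerSinCoeff θ) := by
  have hsq (c : ℝ) : Summable fun n : ℤ ↦ (((n + 1 / 2) * π + c)⁻¹) ^ 2 := by
    refine (((Real.summable_one_div_int_add_rpow (1 / 2 + c / π) 2).mpr one_lt_two).mul_left
      (π⁻¹ ^ 2)).congr fun n ↦ ?_
    have : (n + 1 / 2) * π + c = π * (n + (1 / 2 + c / π)) := by field_simp; ring
    rw [this, rpow_two, sq_abs, mul_inv, mul_pow, one_div, inv_pow (_ + _)]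
  have hprod : Summable fun n : ℤ ↦ ((n + 1 / 2) * π + -θ)⁻¹ * ((n + 1 / 2) * π + θ)⁻¹ := by
    refine .of_norm_bounded ((hsq (-θ)).add (hsq θ)) fun n ↦ ?_
    rw [norm_eq_abs, abs_le]
    constructor <;> nlinarith [sq_nonneg (((n + 1 / 2) * π + -θ)⁻¹ + ((n + 1 / 2) * π + θ)⁻¹),
      sq_nonneg (((n + 1 / 2) * π + -θ)⁻¹ - ((n + 1 / 2) * π + θ)⁻¹)]
  refine (hprod.mul_left (θ * cos θ)).congr fun n ↦ ?_
  rw [halfIntegerSinCoeff, ← mul_inv, div_eq_mul_inv]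
  ring

theorem integral_exp_mul_sin_add_mul {μ a b : ℂ} (h : μ ^ 2 + b ^ 2 ≠ 0) (u v : ℝ) :
    ∫ s in u..v, Complex.exp (μ * s) * Complex.sin (a + b * s) =
      (Complex.exp (μ * v) * (μ * Complex.sin (a + b * v) - b * Complex.cos (a + b * v)) -
        Complex.exp (μ * u) * (μ * Complex.sin (a + b * u) - b * Complex.cos (a + b * u))) /
        (μ ^ 2 + b ^ 2) := by
  have hderiv (s : ℝ) : HasDerivAt
      (fun s : ℝ ↦ Complex.exp (μ * s) *
        (μ * Complex.sin (a + b * s) - b * Complex.cos (a + b * s)) / (μ ^ 2 + b ^ 2))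
      (Complex.exp (μ * s) * Complex.sin (a + b * s)) s := by
    have hlin : HasDerivAt (fun z : ℂ ↦ a + b * z) b s := by
      simpa using ((hasDerivAt_id (s : ℂ)).const_mul b).const_add a
    have hexp : HasDerivAt (fun z : ℂ ↦ Complex.exp (μ * z)) (Complex.exp (μ * s) * μ) s := by
      simpa using ((hasDerivAt_id (s : ℂ)).const_mul μ).cexp
    convert ((hexp.mul ((hlin.csin.const_mul μ).sub (hlin.ccos.const_mul b))).div_const
      (μ ^ 2 + b ^ 2)).comp_ofReal using 1
    · rfl
    · rw [eq_div_iff h, Pi.sub_apply]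
      ring
  rw [intervalIntegral.integral_eq_sub_of_hasDerivAt (fun s _ ↦ hderiv s)
    (Continuous.intervalIntegrable (by fun_prop) _ _), ← sub_div]

theorem fourierCoeffOn_exp_mul_sin {θ : ℝ} (hθ : cos θ ≠ 0) (n : ℤ) :
    fourierCoeffOn zero_lt_one
      (fun s ↦ Complex.exp (-π * Complex.I * s) * Complex.sin (θ * (1 - 2 * s))) n =
      halfIntegerSinCoeff θ n := by
  set μ : ℂ := -(2 * n + 1) * π * Complex.I with hμ
  have hexp : Complex.exp μ = -1 := by
    have : μ = π * Complex.I + (-(n + 1) : ℤ) * (2 * π * Complex.I) := by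
      rw [hμ]; push_cast; ring
    rw [this, Complex.exp_add, Complex.exp_int_mul_two_pi_mul_I, Complex.exp_pi_mul_I, mul_one]
  have hden : μ ^ 2 + (-2 * θ) ^ 2 = ((-4 * (((n + 1 / 2) * π) ^ 2 - θ ^ 2) : ℝ) : ℂ) := by
    rw [hμ]
    push_cast
    linear_combination ((2 * n + 1) * π) ^ 2 * Complex.I_sq
  have hne : μ ^ 2 + (-2 * θ) ^ 2 ≠ 0 := by
    rw [hden]
    exact_mod_cast mul_ne_zero (by norm_num)
      (sub_ne_zero.mpr fun h ↦ hθ (cos_eq_zero_of_sq_eq_sq h.symm))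
  have hintegrand (s : ℝ) : fourier (-n) (s : AddCircle (1 - 0 : ℝ)) •
      (Complex.exp (-π * Complex.I * s) * Complex.sin (θ * (1 - 2 * s))) =
      Complex.exp (μ * s) * Complex.sin (θ + -2 * θ * s) := by
    rw [fourier_coe_apply, smul_eq_mul, ← mul_assoc, ← Complex.exp_add, hμ]
    push_cast
    ring_nf
  have hend : (θ : ℂ) + -2 * θ = -θ := by ring
  simp only [fourierCoeffOn_eq_integral, hintegrand, integral_exp_mul_sin_add_mul hne, sub_zero,
    div_one, one_smul, Complex.ofReal_one, Complex.ofReal_zero, mul_one, mul_zero, add_zero, hexp,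
    hend, Complex.exp_zero, one_mul, Complex.sin_neg, Complex.cos_neg]
  rw [hden, halfIntegerSinCoeff, ← mul_div_mul_left (θ * cos θ) _ (show (-4 : ℝ) ≠ 0 by norm_num),
    Complex.ofReal_div]
  congr 1
  push_cast
  ring

theorem hasSum_halfIntegerSinCoeff_mul_exp {θ : ℝ} (hθ : cos θ ≠ 0) {s : ℝ}
    (hs : s ∈ Set.Icc (0 : ℝ) 1) :
    HasSum (fun n : ℤ ↦ halfIntegerSinCoeff θ n * Complex.exp ((2 * n + 1) * π * s * Complex.I))
      (Complex.sin (θ * (1 - 2 * s))) := by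
  have hsum : Summable fun n ↦ (halfIntegerSinCoeff θ n : ℂ) :=
    Complex.ofRealCLM.summable (summable_halfIntegerSinCoeff θ)
  have hperiodic : Complex.exp (-π * Complex.I * (0 : ℝ)) * Complex.sin (θ * (1 - 2 * (0 : ℝ))) =
      Complex.exp (-π * Complex.I * (1 : ℝ)) * Complex.sin (θ * (1 - 2 * (1 : ℝ))) := by
    have hexp : Complex.exp (-π * Complex.I) = -1 := by
      rw [neg_mul, Complex.exp_neg, Complex.exp_pi_mul_I, inv_neg_one]
    have hend : (θ : ℂ) * (1 - 2) = -θ := by ring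
    rw [Complex.ofReal_zero, Complex.ofReal_one, mul_one, mul_one, hexp, hend, Complex.sin_neg,
      mul_zero, mul_zero, Complex.exp_zero, sub_zero, mul_one, neg_mul_neg]
  have hcancel : Complex.exp (π * Complex.I * s) * Complex.exp (-π * Complex.I * s) = 1 := by
    rw [neg_mul, neg_mul, Complex.exp_neg, mul_inv_cancel₀ (Complex.exp_ne_zero _)]
  have h := (hasSum_fourierCoeffOn_mul_fourier zero_lt_one (by fun_prop) hperiodic
    (hsum.congr fun n ↦ (fourierCoeffOn_exp_mul_sin hθ n).symm) hs).mul_left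
    (Complex.exp (π * Complex.I * s))
  rw [← mul_assoc, hcancel, one_mul] at h
  refine h.congr_fun fun n ↦ ?_
  rw [fourierCoeffOn_exp_mul_sin hθ, fourier_coe_apply, mul_left_comm, ← Complex.exp_add]
  push_cast
  ring_nf

theorem hasSum_halfIntegerSinCoeff {θ : ℝ} (hθ : cos θ ≠ 0) :
    HasSum (halfIntegerSinCoeff θ) (sin θ) := by
  have h := hasSum_halfIntegerSinCoeff_mul_exp hθ (s := 0) (by simp)
  simp only [Complex.ofReal_zero, mul_zero, zero_mul, Complex.exp_zero, mul_one, sub_zero] at h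
  exact_mod_cast h

theorem sin_lt_cos_of_lt_pi_div_four {x : ℝ} (h0 : 0 ≤ x) (hx : x < π / 4) : sin x < cos x := by
  rw [← sin_pi_div_two_sub]
  exact sin_lt_sin_of_lt_of_le_pi_div_two (by linarith) (by linarith) (by linarith)

theorem cos_pos_of_abs_le_pi_div_four {x : ℝ} (hx : |x| ≤ π / 4) : 0 < cos x := by
  obtain ⟨hl, hu⟩ := abs_le.mp hx
  exact cos_pos_of_mem_Ioo ⟨by linarith [pi_pos], by linarith [pi_pos]⟩

theorem monotoneOn_mul_cos : MonotoneOn (fun x ↦ x * cos x) (Set.Icc 0 (π / 4)) := by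
  refine monotoneOn_of_deriv_nonneg (convex_Icc _ _) (by fun_prop) (by fun_prop) fun x hx ↦ ?_
  obtain ⟨hx0, hx1⟩ := interior_Icc (α := ℝ) ▸ hx
  have hd : HasDerivAt (fun x ↦ x * cos x) (1 * cos x + x * -sin x) x :=
    (hasDerivAt_id x).mul (hasDerivAt_cos x)
  have hsin : 0 ≤ sin x := sin_nonneg_of_nonneg_of_le_pi hx0.le (by linarith)
  rw [hd.deriv]
  nlinarith [sin_lt_cos_of_lt_pi_div_four hx0.le hx1, pi_lt_four]

theorem abs_halfIntegerSinCoeff_le {x θ : ℝ} (hx : |x| ≤ θ) (hθ : θ ≤ π / 4) (n : ℤ) :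
    |halfIntegerSinCoeff x n| ≤ halfIntegerSinCoeff θ n := by
  have hθ0 : 0 ≤ θ := (abs_nonneg x).trans hx
  have hcos {y : ℝ} (hy : |y| ≤ θ) : 0 ≤ cos y :=
    (cos_pos_of_abs_le_pi_div_four (hy.trans hθ)).le
  have hnum : |x * cos x| ≤ θ * cos θ := by
    rw [abs_mul, abs_of_nonneg (hcos hx), ← cos_abs]
    exact monotoneOn_mul_cos ⟨abs_nonneg x, hx.trans hθ⟩ ⟨hθ0, hθ⟩ hx
  have hden : 0 < (((n : ℝ) + 1 / 2) * π) ^ 2 - θ ^ 2 := by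
    have hn : (0 : ℤ) ≤ n * (n + 1) := by rcases le_or_gt 0 n with h | h <;> nlinarith
    have hn_real : (0 : ℝ) ≤ n * (n + 1) := by exact_mod_cast hn
    nlinarith [pi_pos, mul_nonneg hn_real (sq_nonneg π)]
  have hsq : x ^ 2 ≤ θ ^ 2 := sq_le_sq.mpr (hx.trans (le_abs_self θ))
  rw [halfIntegerSinCoeff, halfIntegerSinCoeff, abs_div]
  exact div_le_div₀ (mul_nonneg hθ0 (hcos (abs_of_nonneg hθ0).le)) hnum hden
    ((sub_le_sub_left hsq _).trans (le_abs_self _))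

end FourierSeries

section SchurMultiplier

open scoped Matrix Matrix.Norms.L2Operator

variable {m n ι 𝕜 : Type*} [Fintype m] [Fintype n] [DecidableEq n] [RCLike 𝕜]

/-- Entrywise multiplication by `M`, as an operator on matrices with the spectral norm, has norm at
most `C`; that is, the Schur multiplier `M` is bounded by `C`. -/
def SchurMultiplierBound (C : ℝ) (M : Matrix m n 𝕜) : Prop :=
  ∀ F : Matrix m n 𝕜, ‖M ⊙ F‖ ≤ C * ‖F‖

namespace SchurMultiplierBound

variable {A B : Matrix m n 𝕜} {a b : ℝ}

theorem mono (hA : SchurMultiplierBound a A) (hab : a ≤ b) : SchurMultiplierBound b A := fun F ↦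
  (hA F).trans (mul_le_mul_of_nonneg_right hab (norm_nonneg F))

theorem add (hA : SchurMultiplierBound a A) (hB : SchurMultiplierBound b B) :
    SchurMultiplierBound (a + b) (A + B) := fun F ↦ by
  rw [Matrix.add_hadamard, add_mul]
  exact norm_add_le_of_le (hA F) (hB F)

theorem smul (c : 𝕜) (hA : SchurMultiplierBound a A) : SchurMultiplierBound (‖c‖ * a) (c • A) :=
  fun F ↦ by
    rw [Matrix.smul_hadamard, norm_smul, mul_assoc]
    exact mul_le_mul_of_nonneg_left (hA F) (norm_nonneg c)

theorem hadamard (ha : 0 ≤ a) (hA : SchurMultiplierBound a A) (hB : SchurMultiplierBound b B) :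
    SchurMultiplierBound (a * b) (A ⊙ B) := fun F ↦ by
  rw [Matrix.hadamard_assoc, mul_assoc]
  exact (hA _).trans (mul_le_mul_of_nonneg_left (hB F) ha)

theorem vecMulVec (x : m → 𝕜) (y : n → 𝕜) :
    SchurMultiplierBound (‖x‖ * ‖y‖) (Matrix.vecMulVec x y) := fun F ↦ by
  classical
  have hfactor : Matrix.vecMulVec x y ⊙ F = Matrix.diagonal x * F * Matrix.diagonal y := by
    ext j k
    rw [Matrix.mul_diagonal, Matrix.diagonal_mul, Matrix.hadamard_apply, Matrix.vecMulVec_apply]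
    ring
  calc ‖Matrix.vecMulVec x y ⊙ F‖ ≤ ‖Matrix.diagonal x‖ * ‖F‖ * ‖Matrix.diagonal y‖ := by
        rw [hfactor]
        exact (Matrix.l2_opNorm_mul _ _).trans
          (mul_le_mul_of_nonneg_right (Matrix.l2_opNorm_mul _ _) (norm_nonneg _))
    _ = ‖x‖ * ‖y‖ * ‖F‖ := by
        rw [Matrix.l2_opNorm_diagonal, Matrix.l2_opNorm_diagonal, mul_right_comm]

theorem of_hasSum {M : ι → Matrix m n 𝕜} {c : ι → ℝ} (hM : ∀ i, SchurMultiplierBound (c i) (M i))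
    (hA : HasSum M A) (ha : HasSum c a) : SchurMultiplierBound a A := fun F ↦ by
  have hAF : HasSum (fun i ↦ M i ⊙ F) (A ⊙ F) := Pi.hasSum.mpr fun j ↦ Pi.hasSum.mpr fun k ↦
    (Pi.hasSum.mp (Pi.hasSum.mp hA j) k).mul_right (F j k)
  exact hAF.norm_le_of_bounded (ha.mul_right ‖F‖) fun i ↦ hM i F

end SchurMultiplierBound

section Kadec

variable {x : m → ℝ} {t : n → ℝ} {θ : ℝ}

theorem schurMultiplierBound_sin (hθ0 : 0 ≤ θ) (hθ : θ ≤ π / 4) (hx : ∀ j, |x j| ≤ θ)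
    (ht : ∀ k, |t k| ≤ 1) :
    SchurMultiplierBound (sin θ) (Matrix.of fun j k ↦ Complex.sin (x j * t k)) := by
  have hcos {y : ℝ} (hy : |y| ≤ θ) : cos y ≠ 0 := (cos_pos_of_abs_le_pi_div_four (hy.trans hθ)).ne'
  refine .of_hasSum (M := fun n : ℤ ↦ Matrix.vecMulVec
      (fun j ↦ (halfIntegerSinCoeff (x j) n : ℂ))
      (fun k ↦ Complex.exp ((2 * n + 1) * π * ((1 - t k) / 2 : ℝ) * Complex.I)))
    (fun n ↦ (SchurMultiplierBound.vecMulVec _ _).mono ?_)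
    (Pi.hasSum.mpr fun j ↦ Pi.hasSum.mpr fun k ↦ ?_)
    (hasSum_halfIntegerSinCoeff (hcos (abs_of_nonneg hθ0).le))
  · have hnonneg : 0 ≤ halfIntegerSinCoeff θ n :=
      (abs_nonneg _).trans (abs_halfIntegerSinCoeff_le (abs_of_nonneg hθ0).le hθ n)
    refine (mul_le_mul ?_ ?_ (norm_nonneg _) hnonneg).trans_eq (mul_one _)
    · refine (pi_norm_le_iff_of_nonneg hnonneg).mpr fun j ↦ ?_
      rw [Complex.norm_real]
      exact abs_halfIntegerSinCoeff_le (hx j) hθ n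
    · refine (pi_norm_le_iff_of_nonneg zero_le_one).mpr fun k ↦ ?_
      exact_mod_cast (Complex.norm_exp_ofReal_mul_I ((2 * n + 1) * π * ((1 - t k) / 2))).le
  · obtain ⟨htl, htu⟩ := abs_le.mp (ht k)
    have h := hasSum_halfIntegerSinCoeff_mul_exp (hcos (hx j)) (s := (1 - t k) / 2)
      ⟨by linarith, by linarith⟩
    have htk : (1 : ℂ) - 2 * ((1 - t k) / 2 : ℝ) = t k := by push_cast; ring
    rwa [htk] at h

theorem cos_eq_one_sub_two_mul_sin_half_sq (z : ℂ) :
    Complex.cos z = 1 - 2 * Complex.sin (z / 2) ^ 2 := by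
  rw [Complex.sin_sq, ← mul_div_cancel₀ z two_ne_zero, Complex.cos_two_mul]
  ring_nf

theorem exp_neg_mul_I_sub_one_eq (z : ℂ) :
    Complex.exp (-z * Complex.I) - 1 =
      -2 * (Complex.sin (z / 2) * Complex.sin (z / 2)) + -Complex.I * Complex.sin z := by
  rw [Complex.exp_mul_I, Complex.cos_neg, Complex.sin_neg, cos_eq_one_sub_two_mul_sin_half_sq]
  ring

theorem schurMultiplierBound_exp_sub_one (hθ0 : 0 ≤ θ) (hθ : θ ≤ π / 4) (hx : ∀ j, |x j| ≤ θ)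
    (ht : ∀ k, |t k| ≤ 1) :
    SchurMultiplierBound (1 - cos θ + sin θ)
      (Matrix.of fun j k ↦ Complex.exp (-(x j * t k) * Complex.I) - 1) := by
  have hsin := schurMultiplierBound_sin hθ0 hθ hx ht
  have hsin2 : SchurMultiplierBound (sin (θ / 2))
      (Matrix.of fun j k ↦ Complex.sin ((x j / 2 : ℝ) * t k)) :=
    schurMultiplierBound_sin (by linarith) (by linarith)
      (fun j ↦ by rw [abs_div, abs_two]; linarith [hx j]) ht
  have hsin2_nonneg : 0 ≤ sin (θ / 2) :=
    sin_nonneg_of_nonneg_of_le_pi (by linarith) (by linarith [pi_pos])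
  convert ((hsin2.hadamard hsin2_nonneg hsin2).smul (-2)).add (hsin.smul (-Complex.I)) using 1
  · have hcos : cos θ = 1 - 2 * sin (θ / 2) ^ 2 := by
      exact_mod_cast cos_eq_one_sub_two_mul_sin_half_sq θ
    rw [hcos, norm_neg, norm_neg, Complex.norm_I, Complex.norm_ofNat]
    ring
  · ext j k
    simp only [Matrix.of_apply, Matrix.add_apply, Matrix.smul_apply, Matrix.hadamard_apply,
      smul_eq_mul, exp_neg_mul_I_sub_one_eq]
    push_cast
    ring_nf

end Kadec

end SchurMultiplier

section Perturbation

theorem isUnit_of_norm_inv_mul_norm_sub_lt {R : Type*} [NormedRing R] [HasSummableGeomSeries R]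
    (x : Rˣ) {y : R} (h : ‖(↑x⁻¹ : R)‖ * ‖y - x‖ < 1) : IsUnit y := by
  have hfactor : y = x * (1 - ↑x⁻¹ * (x - y)) := by
    rw [mul_sub, mul_one, x.mul_inv_cancel_left, sub_sub_cancel]
  rw [hfactor]
  refine x.isUnit.mul (isUnit_one_sub_of_norm_lt_one ((norm_mul_le _ _).trans_lt ?_))
  rwa [norm_sub_rev]

theorem norm_units_inv_le_of_norm_sub_lt {R : Type*} [NormedRing R] (x y : Rˣ)
    (h : ‖(↑x⁻¹ : R)‖ * ‖(y - x : R)‖ < 1) :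
    ‖(↑y⁻¹ : R)‖ ≤ ‖(↑x⁻¹ : R)‖ / (1 - ‖(↑x⁻¹ : R)‖ * ‖(y - x : R)‖) := by
  have hresolvent : (↑y⁻¹ : R) = ↑x⁻¹ - ↑x⁻¹ * (y - x) * ↑y⁻¹ := by
    rw [mul_sub, sub_mul, Units.inv_mul, one_mul, mul_assoc, Units.mul_inv, mul_one, sub_sub_cancel]
  have hnorm : ‖(↑y⁻¹ : R)‖ ≤
      ‖(↑x⁻¹ : R)‖ + ‖(↑x⁻¹ : R)‖ * ‖(y - x : R)‖ * ‖(↑y⁻¹ : R)‖ := by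
    conv_lhs => rw [hresolvent]
    exact norm_sub_le_of_le le_rfl ((norm_mul_le _ _).trans
      (mul_le_mul_of_nonneg_right (norm_mul_le _ _) (norm_nonneg _)))
  rw [le_div_iff₀ (sub_pos.mpr h)]
  linarith

open scoped Matrix Matrix.Norms.L2Operator

variable {n 𝕜 : Type*} [Fintype n] [DecidableEq n] [RCLike 𝕜] {A B : Matrix n n 𝕜} {c : ℝ}

theorem norm_le_sqrt_of_conjTranspose_mul_self_eq_smul_one (hc : 0 ≤ c)
    (hA : Aᴴ * A = (c : 𝕜) • 1) : ‖A‖ ≤ √c := by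
  refine le_sqrt_of_sq_le ?_
  rw [sq, ← Matrix.l2_opNorm_conjTranspose_mul_self, hA, norm_smul, RCLike.norm_of_nonneg hc]
  refine mul_le_of_le_one_right hc ?_
  rw [← Matrix.diagonal_one, Matrix.l2_opNorm_diagonal]
  exact (pi_norm_le_iff_of_nonneg zero_le_one).mpr fun _ ↦ norm_one.le

theorem isUnit_and_norm_inv_le_of_conjTranspose_mul_self_eq_smul_one (hc : 0 < c)
    (hA : Aᴴ * A = (c : 𝕜) • 1) :
    IsUnit A ∧ ‖A⁻¹‖ ≤ 1 / √c := by
  have hleft : ((c : 𝕜)⁻¹ • Aᴴ) * A = 1 := by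
    rw [Matrix.smul_mul, hA, inv_smul_smul₀ (RCLike.ofReal_ne_zero.mpr hc.ne')]
  refine ⟨.of_mul_eq_one_right _ hleft, ?_⟩
  calc ‖A⁻¹‖ = c⁻¹ * ‖A‖ := by
        rw [Matrix.inv_eq_left_inv hleft, norm_smul, norm_inv, RCLike.norm_of_nonneg hc.le,
          Matrix.l2_opNorm_conjTranspose]
    _ ≤ c⁻¹ * √c := mul_le_mul_of_nonneg_left
        (norm_le_sqrt_of_conjTranspose_mul_self_eq_smul_one hc.le hA) (inv_nonneg.mpr hc.le)
    _ = 1 / √c := by rw [inv_mul_eq_div, sqrt_div_self']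

theorem isUnit_and_norm_inv_le_of_norm_sub_le {φ : ℝ} (hc : 0 < c) (hA : Aᴴ * A = (c : 𝕜) • 1)
    (hφ : φ < 1) (hB : ‖B - A‖ ≤ φ * √c) : IsUnit B ∧ ‖B⁻¹‖ ≤ 1 / ((1 - φ) * √c) := by
  have hsqrt : √c ≠ 0 := sqrt_ne_zero'.mpr hc
  obtain ⟨⟨u, rfl⟩, hu⟩ := isUnit_and_norm_inv_le_of_conjTranspose_mul_self_eq_smul_one hc hA
  rw [← Matrix.coe_units_inv] at hu
  have hrel : ‖(↑u⁻¹ : Matrix n n 𝕜)‖ * ‖B - u‖ ≤ φ := by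
    calc ‖(↑u⁻¹ : Matrix n n 𝕜)‖ * ‖B - u‖ ≤ 1 / √c * (φ * √c) :=
          mul_le_mul hu hB (norm_nonneg _) (by positivity)
      _ = φ := by rw [mul_comm φ, one_div, inv_mul_cancel_left₀ hsqrt]
  obtain ⟨v, rfl⟩ := isUnit_of_norm_inv_mul_norm_sub_lt u (hrel.trans_lt hφ)
  refine ⟨v.isUnit, ?_⟩
  rw [← Matrix.coe_units_inv]
  calc ‖(↑v⁻¹ : Matrix n n 𝕜)‖
      ≤ ‖(↑u⁻¹ : Matrix n n 𝕜)‖ / (1 - ‖(↑u⁻¹ : Matrix n n 𝕜)‖ * ‖(v - u : Matrix n n 𝕜)‖) :=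
        norm_units_inv_le_of_norm_sub_lt u v (hrel.trans_lt hφ)
    _ ≤ 1 / √c / (1 - φ) :=
        div_le_div₀ (by positivity) hu (sub_pos.mpr hφ) (sub_le_sub_left hrel 1)
    _ = 1 / ((1 - φ) * √c) := by rw [div_div, mul_comm]

end Perturbation

section Fourier

open scoped Matrix Matrix.Norms.L2Operator

variable {m n : Type*}

/-- The matrix sampling the exponentials with frequencies `ω` at the nodes `x`. The sign convention
is that of the forward transform. -/
noncomputable def fourierMatrix (x : m → ℝ) (ω : n → ℝ) : Matrix m n ℂ :=
  Matrix.of fun j k ↦ Complex.exp (-Complex.I * x j * ω k)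

/-- The `M` equispaced nodes of one period `2π`, numbered so that the possibly fractional index `a`
corresponds to the point `0`. -/
noncomputable def equispacedNode (M : ℕ) (a : ℝ) (j : Fin M) : ℝ :=
  ((j : ℕ) - a) * (2 * π / M)

/-- The `M` consecutive frequencies starting at `-b`, which are the integers from `-N` to `N` when
`M = 2N + 1` and `b = N`. -/
def consecutiveFrequency (M : ℕ) (b : ℝ) (k : Fin M) : ℝ :=
  (k : ℕ) - b

theorem fourierMatrix_equispacedNode_conjTranspose_mul_self {M : ℕ} (hM : M ≠ 0) (a b : ℝ) :
    (fourierMatrix (equispacedNode M a) (consecutiveFrequency M b))ᴴ *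
      fourierMatrix (equispacedNode M a) (consecutiveFrequency M b) = (M : ℂ) • 1 := by
  set F := fourierMatrix (equispacedNode M a) (consecutiveFrequency M b) with hF
  have hζ := Complex.isPrimitiveRoot_exp M hM
  set ζ := Complex.exp (2 * π * Complex.I / M)
  ext k l
  have hterm (j : Fin M) : star (F j k) * F j l =
      Complex.exp (-Complex.I * a * (2 * π / M) * (k - l)) * (ζ ^ ((k : ℤ) - l)) ^ (j : ℕ) := by
    simp only [hF, fourierMatrix, Matrix.of_apply, equispacedNode, consecutiveFrequency,
      Complex.star_def, ← Complex.exp_conj, ζ, ← Complex.exp_int_mul, ← Complex.exp_nat_mul,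
      ← Complex.exp_add, map_mul, map_neg, Complex.conj_I, Complex.conj_ofReal]
    push_cast
    ring_nf
  rw [Matrix.mul_apply, Matrix.smul_apply, smul_eq_mul]
  simp only [Matrix.conjTranspose_apply, hterm]
  rw [← mul_sum, Fin.sum_univ_eq_sum_range fun i ↦ (ζ ^ ((k : ℤ) - l)) ^ i]
  rcases eq_or_ne k l with rfl | hkl
  · simp
  · have hne : ζ ^ ((k : ℤ) - l) ≠ 1 := by
      rw [Ne, hζ.zpow_eq_one_iff_dvd]
      intro hdvd
      have := Int.eq_zero_of_abs_lt_dvd hdvd (by rw [abs_lt]; omega)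
      omega
    have hpow : (ζ ^ ((k : ℤ) - l)) ^ M = 1 := by
      rw [← zpow_natCast, zpow_comm, zpow_natCast, hζ.pow_eq_one, one_zpow]
    rw [geom_sum_eq hne, hpow, sub_self, zero_div, mul_zero, Matrix.one_apply_ne hkl, mul_zero]

variable [Fintype m] [Fintype n] [DecidableEq n]

theorem norm_fourierMatrix_sub_le {x y : m → ℝ} {ω : n → ℝ} {θ Ω : ℝ} (hθ0 : 0 ≤ θ)
    (hθ : θ ≤ π / 4) (hΩ : 0 < Ω) (hω : ∀ k, |ω k| ≤ Ω) (hxy : ∀ j, |y j - x j| * Ω ≤ θ) :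
    ‖fourierMatrix y ω - fourierMatrix x ω‖ ≤
      (1 - cos θ + sin θ) * ‖fourierMatrix x ω‖ := by
  convert schurMultiplierBound_exp_sub_one (x := fun j ↦ (y j - x j) * Ω)
    (t := fun k ↦ ω k / Ω) hθ0 hθ (fun j ↦ ?_) (fun k ↦ ?_) (fourierMatrix x ω) using 2
  · ext j k
    have hΩ0 : (Ω : ℂ) ≠ 0 := Complex.ofReal_ne_zero.mpr hΩ.ne'
    have hphase : (((y j - x j) * Ω : ℝ) : ℂ) * ((ω k / Ω : ℝ) : ℂ) = (y j - x j) * ω k := by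
      push_cast
      field_simp
    simp only [fourierMatrix, Matrix.sub_apply, Matrix.hadamard_apply, Matrix.of_apply]
    rw [hphase, sub_mul, one_mul, ← Complex.exp_add]
    ring_nf
  · rw [abs_mul, abs_of_pos hΩ]
    exact hxy j
  · rw [abs_div, abs_of_pos hΩ]
    exact div_le_one_of_le₀ (hω k) hΩ.le

end Fourier

section Nudft

open scoped Matrix Matrix.Norms.L2Operator

theorem nudft_inverse_spectral_bound_general {M : ℕ} (hM : M ≠ 0) {a b α : ℝ}
    (hb : b ∈ Set.Icc (M / 2 - 1 : ℝ) (M / 2)) (hα : α < 1 / 4) {x : Fin M → ℝ}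
    (hx : ∀ j, |x j - equispacedNode M a j| ≤ α * (2 * π / M)) :
    IsUnit (fourierMatrix x (consecutiveFrequency M b)) ∧
    ‖(fourierMatrix x (consecutiveFrequency M b))⁻¹‖ ≤
      1 / ((1 - (1 - cos (π * α) + sin (π * α))) * √M) := by
  have hM0 : (0 : ℝ) < M := by exact_mod_cast hM.bot_lt
  have hα0 : 0 ≤ α := nonneg_of_mul_nonneg_left ((abs_nonneg _).trans (hx ⟨0, hM.bot_lt⟩))
    (by positivity)
  have hθ0 : 0 ≤ π * α := mul_nonneg pi_pos.le hα0
  have hθ : π * α < π / 4 := by nlinarith [pi_pos]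
  have hfreq (k : Fin M) : |consecutiveFrequency M b k| ≤ M / 2 := by
    have hk : ((k : ℕ) : ℝ) + 1 ≤ M := by exact_mod_cast k.isLt
    rw [consecutiveFrequency, abs_le]
    exact ⟨by linarith [hb.2, Nat.cast_nonneg (α := ℝ) k], by linarith [hb.1]⟩
  have hshift (j) : |x j - equispacedNode M a j| * (M / 2) ≤ π * α := by
    calc |x j - equispacedNode M a j| * (M / 2) ≤ α * (2 * π / M) * (M / 2) :=
          mul_le_mul_of_nonneg_right (hx j) (by positivity)
      _ = π * α := by field_simp
  have hsin : 0 ≤ sin (π * α) := sin_nonneg_of_nonneg_of_le_pi hθ0 (by linarith)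
  have horth := fourierMatrix_equispacedNode_conjTranspose_mul_self hM a b
  rw [← Complex.ofReal_natCast] at horth
  refine isUnit_and_norm_inv_le_of_norm_sub_le hM0 horth
    (by linarith [sin_lt_cos_of_lt_pi_div_four hθ0 hθ])
    ((norm_fourierMatrix_sub_le hθ0 hθ.le (by positivity) hfreq hshift).trans ?_)
  exact mul_le_mul_of_nonneg_left
    (norm_le_sqrt_of_conjTranspose_mul_self_eq_smul_one hM0.le horth)
    (by linarith [cos_le_one (π * α)])

end Nudft

/-- the NUDFT matrix at α-perturbed nodes (α < 1/4) is invertible, with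
a spectral-norm bound on its inverse. -/
theorem nudft_inverse_spectral_bound (N : ℕ) (hN : 0 < N) (α : ℝ) (hα0 : 0 ≤ α) (hα : α < 1/4)
    (xt : Fin (2*N+1) → ℝ)
    (hxt : ∀ j, |xt j - (((j : ℕ) : ℝ) - (N : ℝ)) * (2*π/(2*N+1))| ≤ α * (2*π/(2*N+1)))
    (Ftil : Matrix (Fin (2*N+1)) (Fin (2*N+1)) ℂ)
    (hFtil : ∀ j k, Ftil j k =
      Complex.exp (-Complex.I * (xt j : ℂ) * (((k : ℕ) : ℂ) - (N : ℂ)))) :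
    IsUnit Ftil ∧
    ‖Matrix.toEuclideanCLM (𝕜 := ℂ) Ftil⁻¹‖ ≤
      1 / ((1 - (1 - Real.cos (π*α) + Real.sin (π*α))) * Real.sqrt (2*N+1)) := by
  have hb : (N : ℝ) ∈ Set.Icc (((2 * N + 1 : ℕ) : ℝ) / 2 - 1) (((2 * N + 1 : ℕ) : ℝ) / 2) := by
    constructor <;> push_cast <;> linarith
  have hFtil_eq : Ftil = fourierMatrix xt (consecutiveFrequency _ N) := by
    ext j k
    simp only [hFtil, fourierMatrix, consecutiveFrequency, Matrix.of_apply, Complex.ofReal_sub,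
      Complex.ofReal_natCast]
  have hnode (j) : |xt j - equispacedNode (2 * N + 1) N j| ≤
      α * (2 * π / ((2 * N + 1 : ℕ) : ℝ)) := by
    rw [equispacedNode]
    exact_mod_cast hxt j
  rw [Matrix.l2_opNorm_toEuclideanCLM, hFtil_eq]
  exact_mod_cast nudft_inverse_spectral_bound_general (2 * N).succ_ne_zero hb hα hnode
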